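/- Let L ≥ 1 be an integer, λ > 0, and let M♮ ∈ ℝ^{m × n}. Let M* be any global minimizer over ℝ^{m×n} of the Schatten-regularized objective 𝓛_{M♮}(M) := ‖M♮ − M‖_F² + λ·‖M‖_{S^{2/L}}^{2/L}. Then M* and M♮ share singular vectors: there exist orthogonal matrices U ∈ ℝ^{m×m} and V ∈ ℝ^{n×n} and rectangular-diagonal matrices Σ♮, Σ* ∈ ℝ^{m×n} with non-negative, non-increasingly ordered diagonal entries such that M♮ = U·Σ♮·Vᵀ and M* = U·Σ*·Vᵀ simultaneously. -/

import Mathlib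

open Matrix

/-- The `i`-th largest singular value of a real matrix `A` (`0`-indexed),
i.e. the non-increasing rearrangement of the square roots of the
eigenvalues of the positive semidefinite matrix `Aᵀ A`. -/
noncomputable def singularValue {m n : ℕ} (A : Matrix (Fin m) (Fin n) ℝ) (i : Fin (min m n)) : ℝ :=
  let ev : Fin n → ℝ := fun j => Real.sqrt ((Matrix.isHermitian_conjTranspose_mul_self A).eigenvalues j)
  (ev ∘ Tuple.sort ev) ((Fin.castLE (Nat.min_le_right m n) i).rev)

/-- Frobenius norm of a real matrix. -/
noncomputable def frobNorm {m n : ℕ} (A : Matrix (Fin m) (Fin n) ℝ) : ℝ :=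
  Real.sqrt (∑ i, ∑ j, (A i j) ^ 2)

/-- `‖A‖_{S^q}^q = ∑_{i=1}^{min m n} σ_i(A)^q`. -/
noncomputable def schattenPow {m n : ℕ} (A : Matrix (Fin m) (Fin n) ℝ) (q : ℝ) : ℝ :=
  ∑ i : Fin (min m n), (singularValue A i) ^ q

/-- Schatten-`q` quasi-norm `‖A‖_{S^q} = (∑ σ_i(A)^q)^{1/q}`. -/
noncomputable def schattenNorm {m n : ℕ} (A : Matrix (Fin m) (Fin n) ℝ) (q : ℝ) : ℝ :=
  (schattenPow A q) ^ (1 / q)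

/-- `chainProd d W L = W_{L-1} * ⋯ * W_1 * W_0` (the end-to-end product of the
first `L` layers, `W_i : ℝ^{d_{i+1} × d_i}`). -/
noncomputable def chainProd (d : ℕ → ℕ) (W : ∀ i : ℕ, Matrix (Fin (d (i + 1))) (Fin (d i)) ℝ) :
    (L : ℕ) → Matrix (Fin (d L)) (Fin (d 0)) ℝ
  | 0 => 1
  | (L + 1) => W L * chainProd d W L

/-- The ℓ²-regularized deep matrix factorization objective
`𝓛(W) = ‖M♮ − W_L ⋯ W_1‖_F² + (λ/L) ∑ᵢ ‖W_i‖_F²`. -/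
noncomputable def deepLoss (L : ℕ) (lam : ℝ) (d : ℕ → ℕ)
    (Mnat : Matrix (Fin (d L)) (Fin (d 0)) ℝ)
    (W : ∀ i : ℕ, Matrix (Fin (d (i + 1))) (Fin (d i)) ℝ) : ℝ :=
  frobNorm (Mnat - chainProd d W L) ^ 2 + (lam / L) * ∑ i : Fin L, frobNorm (W i.1) ^ 2

/-- The Schatten-regularized objective
`𝓛_{M♮}(M) = ‖M♮ − M‖_F² + λ‖M‖_{S^{2/L}}^{2/L}`. -/
noncomputable def schattenLoss (L : ℕ) (lam : ℝ) {m n : ℕ}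
    (Mnat M : Matrix (Fin m) (Fin n) ℝ) : ℝ :=
  frobNorm (Mnat - M) ^ 2 + lam * schattenPow M (2 / L)

/-!
The Schatten term only depends on singular values, so a minimizer `M` of the loss is nearest to the
target `N` within its orbit `{P M Q}` under orthogonal `P`, `Q`; equivalently, `⟨N, P M Q⟩` is
maximal at `P = 1`, `Q = 1`. The singular vectors are taken from an SVD of the *sum* `N + M`.
If orthogonal `P`, `Q` fix `N + M`, then

  `‖M - P M Q‖² = ⟨M - P M Q, P N Q - N⟩ = ⟨M, P N Q⟩ + ⟨P M Q, N⟩ - 2 ⟨M, N⟩ ≤ 0`,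

so they fix `M` as well. Once `N + M` is rectangular-diagonal it is fixed by every simultaneous sign
change of a row and the matching column, which forces `M` to be rectangular-diagonal. Testing
maximality against a single sign change and against a transposition then shows that the diagonals
of `N` and `M` have compatible signs and are ordered alike, and since their sum is nonnegative and
non-increasing, so are both of them.
-/

open Module

section SingularValueDecomposition

variable {𝕜 E F : Type*} [RCLike 𝕜]
  [NormedAddCommGroup E] [InnerProductSpace 𝕜 E] [FiniteDimensional 𝕜 E]
  [NormedAddCommGroup F] [InnerProductSpace 𝕜 F] [FiniteDimensional 𝕜 F]
  (T : E →ₗ[𝕜] F) {m n : ℕ}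

theorem inner_map_eigenvectorBasis_adjoint_comp_self (hn : finrank 𝕜 E = n) (i j : Fin n) :
    inner 𝕜 (T (T.isSymmetric_adjoint_comp_self.eigenvectorBasis hn i))
        (T (T.isSymmetric_adjoint_comp_self.eigenvectorBasis hn j)) =
      if i = j then (T.singularValues j : 𝕜) ^ 2 else 0 := by
  have happly := T.isSymmetric_adjoint_comp_self.apply_eigenvectorBasis hn j
  rw [← T.sq_singularValues_fin hn j, LinearMap.comp_apply] at happly
  rw [← LinearMap.adjoint_inner_right, happly, inner_smul_right,
    orthonormal_iff_ite.mp (OrthonormalBasis.orthonormal _)]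
  simp

theorem map_eigenvectorBasis_adjoint_comp_self_eq_zero (hn : finrank 𝕜 E = n) {j : Fin n}
    (hj : T.singularValues j = 0) :
    T (T.isSymmetric_adjoint_comp_self.eigenvectorBasis hn j) = 0 := by
  rw [← inner_self_eq_zero (𝕜 := 𝕜), inner_map_eigenvectorBasis_adjoint_comp_self]
  simp [hj]

theorem exists_orthonormalBasis_map_eigenvectorBasis_eq_smul (hn : finrank 𝕜 E = n)
    (hm : finrank 𝕜 F = m) :
    ∃ u : OrthonormalBasis (Fin m) 𝕜 F, ∀ (i : Fin m) (j : Fin n), (i : ℕ) = j →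
      T (T.isSymmetric_adjoint_comp_self.eigenvectorBasis hn j) =
        (T.singularValues j : 𝕜) • u i := by
  set v := T.isSymmetric_adjoint_comp_self.eigenvectorBasis hn
  let w : Fin m → F := fun i ↦
    if hi : (i : ℕ) < n then (T.singularValues i : 𝕜)⁻¹ • T (v ⟨i, hi⟩) else 0
  have hlt {i : Fin m} (hi : T.singularValues i ≠ 0) : (i : ℕ) < n := by
    contrapose! hi
    exact T.singularValues_of_finrank_le (hn ▸ hi)
  have hw : Orthonormal 𝕜 ({i : Fin m | T.singularValues i ≠ 0}.domRestrict w) := by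
    rw [orthonormal_iff_ite]
    rintro ⟨i, hi⟩ ⟨j, hj⟩
    have hi' : (T.singularValues i : 𝕜) ≠ 0 := RCLike.ofReal_ne_zero.mpr hi
    simp only [Set.domRestrict_apply, w, hlt hi, hlt hj, dif_pos, inner_smul_left,
      inner_smul_right, v, inner_map_eigenvectorBasis_adjoint_comp_self, Fin.mk.injEq,
      Subtype.mk.injEq, Fin.val_inj, map_inv₀, RCLike.conj_ofReal]
    split_ifs with hij
    · subst hij
      field_simp
    · simp
  obtain ⟨u, hu⟩ := hw.exists_orthonormalBasis_extension_of_card_eq (by simpa using hm)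
  refine ⟨u, fun i j hij ↦ ?_⟩
  by_cases hj : T.singularValues j = 0
  · rw [map_eigenvectorBasis_adjoint_comp_self_eq_zero T hn hj, hj]
    simp
  · have hi : T.singularValues i ≠ 0 := hij ▸ hj
    have hj' : (T.singularValues j : 𝕜) ≠ 0 := RCLike.ofReal_ne_zero.mpr hj
    rw [hu i hi]
    simp only [w, hij, j.isLt, dif_pos, smul_inv_smul₀ hj', Fin.eta]

/-- The rectangular-diagonal `m × n` matrix with diagonal entries `d 0, d 1, …`; the values of `d`
from index `min m n` on are ignored. -/
def rectDiagonal {α : Type*} [Zero α] (m n : ℕ) (d : ℕ → α) : Matrix (Fin m) (Fin n) α :=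
  of fun i j ↦ if (i : ℕ) = j then d j else 0

theorem exists_orthonormalBasis_toMatrix_eq_rectDiagonal (hn : finrank 𝕜 E = n)
    (hm : finrank 𝕜 F = m) :
    ∃ (v : OrthonormalBasis (Fin n) 𝕜 E) (u : OrthonormalBasis (Fin m) 𝕜 F),
      LinearMap.toMatrix v.toBasis u.toBasis T =
        rectDiagonal m n fun i ↦ (T.singularValues i : 𝕜) := by
  obtain ⟨u, hu⟩ := exists_orthonormalBasis_map_eigenvectorBasis_eq_smul T hn hm
  refine ⟨T.isSymmetric_adjoint_comp_self.eigenvectorBasis hn, u, ?_⟩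
  ext i j
  rw [LinearMap.toMatrix_apply, OrthonormalBasis.coe_toBasis,
    OrthonormalBasis.coe_toBasis_repr_apply, OrthonormalBasis.repr_apply_apply]
  by_cases hj : (j : ℕ) < m
  · rw [hu ⟨j, hj⟩ j rfl, inner_smul_right, orthonormal_iff_ite.mp u.orthonormal]
    simp [rectDiagonal, Fin.ext_iff]
  · have hσ : T.singularValues j = 0 :=
      T.singularValues_eq_zero_iff_le_finrank_range.mpr
        ((Submodule.finrank_le _).trans (by omega))
    rw [map_eigenvectorBasis_adjoint_comp_self_eq_zero T hn hσ, inner_zero_right]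
    simp [rectDiagonal, hσ]

theorem exists_unitary_mul_rectDiagonal_mul_star_eq (A : Matrix (Fin m) (Fin n) 𝕜) :
    ∃ U ∈ unitaryGroup (Fin m) 𝕜, ∃ V ∈ unitaryGroup (Fin n) 𝕜,
      U * (rectDiagonal m n fun i ↦ ((toEuclideanLin A).singularValues i : 𝕜)) * star V = A := by
  obtain ⟨v, u, hdiag⟩ := exists_orthonormalBasis_toMatrix_eq_rectDiagonal (toEuclideanLin A)
    finrank_euclideanSpace_fin finrank_euclideanSpace_fin
  let e (k : ℕ) := EuclideanSpace.basisFun (Fin k) 𝕜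
  have hV := (e n).toMatrix_orthonormalBasis_mem_unitary v
  have hstarV : star ((e n).toBasis.toMatrix v) = v.toBasis.toMatrix (e n) := by
    refine left_inv_eq_right_inv (mem_unitaryGroup_iff'.mp hV) ?_
    simpa using (e n).toBasis.toMatrix_mul_toMatrix_flip v.toBasis
  refine ⟨_, (e m).toMatrix_orthonormalBasis_mem_unitary u, _, hV, ?_⟩
  rw [hstarV, ← hdiag, ← (e n).coe_toBasis, ← u.coe_toBasis,
    basis_toMatrix_mul_linearMap_toMatrix_mul_basis_toMatrix,
    toEuclideanLin_eq_toLin_orthonormal, LinearMap.toMatrix_toLin]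

/-- The middle factor of a real singular value decomposition: a rectangular-diagonal matrix with
nonnegative, non-increasing diagonal entries. -/
structure IsSingularValueMatrix (D : Matrix (Fin m) (Fin n) ℝ) : Prop where
  apply_eq_zero : ∀ (i : Fin m) (j : Fin n), (i : ℕ) ≠ (j : ℕ) → D i j = 0
  nonneg : ∀ (i : Fin m) (j : Fin n), 0 ≤ D i j
  apply_le_apply : ∀ (i₁ i₂ : Fin m) (j₁ j₂ : Fin n), (i₁ : ℕ) = (j₁ : ℕ) →
    (i₂ : ℕ) = (j₂ : ℕ) → (i₁ : ℕ) ≤ (i₂ : ℕ) → D i₂ j₂ ≤ D i₁ j₁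

theorem isSingularValueMatrix_rectDiagonal {d : ℕ → ℝ} (hnonneg : ∀ i, 0 ≤ d i)
    (hanti : Antitone d) : IsSingularValueMatrix (rectDiagonal m n d) where
  apply_eq_zero i j hij := by simp [rectDiagonal, hij]
  nonneg i j := by
    simp only [rectDiagonal, of_apply]
    split_ifs
    exacts [hnonneg _, le_rfl]
  apply_le_apply i₁ i₂ j₁ j₂ h₁ h₂ h₁₂ := by
    simpa [rectDiagonal, h₁, h₂] using hanti (h₁ ▸ h₂ ▸ h₁₂)

theorem exists_orthogonal_mul_isSingularValueMatrix_mul_transpose_eq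
    (A : Matrix (Fin m) (Fin n) ℝ) :
    ∃ U ∈ orthogonalGroup (Fin m) ℝ, ∃ V ∈ orthogonalGroup (Fin n) ℝ,
      ∃ D : Matrix (Fin m) (Fin n) ℝ, IsSingularValueMatrix D ∧ U * D * Vᵀ = A := by
  obtain ⟨U, hU, V, hV, hA⟩ := exists_unitary_mul_rectDiagonal_mul_star_eq A
  exact ⟨U, hU, V, hV, _, isSingularValueMatrix_rectDiagonal
    (toEuclideanLin A).singularValues_nonneg (toEuclideanLin A).singularValues_antitone, hA⟩

end SingularValueDecomposition

section OrthogonalGroup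

variable {R m n : Type*} [CommRing R] [Fintype m] [Fintype n] [DecidableEq m] [DecidableEq n]

theorem transpose_mem_orthogonalGroup {A : Matrix n n R} (hA : A ∈ orthogonalGroup n R) :
    Aᵀ ∈ orthogonalGroup n R :=
  (mem_orthogonalGroup_iff _ _).mpr ((mem_orthogonalGroup_iff' _ _).mp hA)

theorem diagonal_mem_orthogonalGroup {d : n → R} (hd : ∀ i, d i * d i = 1) :
    diagonal d ∈ orthogonalGroup n R := by
  simp [mem_orthogonalGroup_iff, hd]

theorem swap_mem_orthogonalGroup (i j : n) : swap R i j ∈ orthogonalGroup n R := by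
  rw [mem_orthogonalGroup_iff, transpose_swap, swap_mul_self]

theorem orthogonal_mul_mul_transpose_cancel {U : Matrix m m R} {V : Matrix n n R}
    (hU : U ∈ orthogonalGroup m R) (hV : V ∈ orthogonalGroup n R) (A : Matrix m n R) :
    U * (Uᵀ * A * V) * Vᵀ = A := by
  calc U * (Uᵀ * A * V) * Vᵀ = U * Uᵀ * A * (V * Vᵀ) := by simp only [Matrix.mul_assoc]
    _ = A := by simp [(mem_orthogonalGroup_iff _ _).mp hU, (mem_orthogonalGroup_iff _ _).mp hV]

end OrthogonalGroup

section FrobeniusInner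

variable {R m n : Type*} [CommRing R] [Fintype m] [Fintype n]

theorem trace_transpose_mul_comm (A B : Matrix m n R) : trace (Aᵀ * B) = trace (Bᵀ * A) := by
  rw [← trace_transpose, transpose_mul, transpose_transpose]

theorem trace_transpose_mul_mul_mul (P : Matrix m m R) (Q : Matrix n n R) (A B : Matrix m n R) :
    trace (Aᵀ * (P * B * Q)) = trace ((Pᵀ * A * Qᵀ)ᵀ * B) := by
  simp only [transpose_mul, transpose_transpose]
  rw [← Matrix.mul_assoc, trace_mul_comm]
  simp only [Matrix.mul_assoc]

variable [DecidableEq m] [DecidableEq n]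

theorem trace_transpose_mul_of_orthogonal {P : Matrix m m R} {Q : Matrix n n R}
    (hP : P ∈ orthogonalGroup m R) (hQ : Q ∈ orthogonalGroup n R) (A B : Matrix m n R) :
    trace ((P * A * Q)ᵀ * (P * B * Q)) = trace (Aᵀ * B) := by
  have hcancel : Pᵀ * (P * A * Q) * Qᵀ = A := by
    simpa using orthogonal_mul_mul_transpose_cancel (transpose_mem_orthogonalGroup hP) hQ A
  rw [trace_transpose_mul_mul_mul, hcancel]

end FrobeniusInner

section Aligned

section

variable {m n : Type*} [Fintype m] [Fintype n] [DecidableEq m] [DecidableEq n]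

/-- `M` is aligned with `N` if the Frobenius inner product `⟨N, P M Q⟩` over orthogonal `P`, `Q` is
maximal at `P = 1`, `Q = 1`. Since `‖P M Q‖ = ‖M‖`, this says that `M` is a point of its
orthogonal orbit nearest to `N`. -/
def IsAligned (N M : Matrix m n ℝ) : Prop :=
  ∀ P ∈ orthogonalGroup m ℝ, ∀ Q ∈ orthogonalGroup n ℝ,
    trace (Nᵀ * (P * M * Q)) ≤ trace (Nᵀ * M)

namespace IsAligned

variable {N M : Matrix m n ℝ}

theorem symm (h : IsAligned N M) : IsAligned M N := fun P hP Q hQ ↦ by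
  rw [trace_transpose_mul_mul_mul, trace_transpose_mul_comm, trace_transpose_mul_comm M]
  exact h _ (transpose_mem_orthogonalGroup hP) _ (transpose_mem_orthogonalGroup hQ)

theorem orthogonal_mul_mul (h : IsAligned N M) {U : Matrix m m ℝ} {V : Matrix n n ℝ}
    (hU : U ∈ orthogonalGroup m ℝ) (hV : V ∈ orthogonalGroup n ℝ) :
    IsAligned (U * N * V) (U * M * V) := fun P hP Q hQ ↦ by
  have hU' := transpose_mem_orthogonalGroup hU
  have hV' := transpose_mem_orthogonalGroup hV
  have hmove : P * (U * M * V) * Q = U * (Uᵀ * P * U * M * (V * Q * Vᵀ)) * V := by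
    simpa only [transpose_transpose, Matrix.mul_assoc] using
      (orthogonal_mul_mul_transpose_cancel hU hV' (P * (U * M * V) * Q)).symm
  rw [hmove, trace_transpose_mul_of_orthogonal hU hV, trace_transpose_mul_of_orthogonal hU hV]
  exact h _ (mul_mem (mul_mem hU' hP) hU) _ (mul_mem (mul_mem hV hQ) hV')

theorem mul_mul_eq_self (h : IsAligned N M) {P : Matrix m m ℝ} {Q : Matrix n n ℝ}
    (hP : P ∈ orthogonalGroup m ℝ) (hQ : Q ∈ orthogonalGroup n ℝ)
    (hfix : P * (N + M) * Q = N + M) : P * M * Q = M := by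
  have hdiff : M - P * M * Q = P * N * Q - N := by
    rw [Matrix.mul_add, Matrix.add_mul] at hfix
    rw [sub_eq_sub_iff_add_eq_add, hfix, add_comm]
  have hle : trace ((M - P * M * Q)ᵀ * (M - P * M * Q)) ≤ 0 := calc
    _ = trace ((M - P * M * Q)ᵀ * (P * N * Q - N)) := by rw [← hdiff]
    _ = trace (Mᵀ * (P * N * Q)) + trace (Nᵀ * (P * M * Q)) - trace (Mᵀ * N) - trace (Nᵀ * M) := by
      simp only [transpose_sub, Matrix.sub_mul, Matrix.mul_sub, trace_sub,
        trace_transpose_mul_of_orthogonal hP hQ, trace_transpose_mul_comm N]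
      ring
    _ ≤ 0 := by linarith [h P hP Q hQ, h.symm P hP Q hQ]
  have hzero : M - P * M * Q = 0 := trace_conjTranspose_mul_self_eq_zero_iff.mp
    (hle.antisymm (posSemidef_conjTranspose_mul_self _).trace_nonneg)
  exact (sub_eq_zero.mp hzero).symm

theorem trace_transpose_mul_nonneg (h : IsAligned N M) {P : Matrix m m ℝ} {Q : Matrix n n ℝ}
    (hP : P ∈ orthogonalGroup m ℝ) (hQ : Q ∈ orthogonalGroup n ℝ) {E : Matrix m n ℝ}
    (hE : P * M * Q = M - E) : 0 ≤ trace (Nᵀ * E) := by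
  have hle := h P hP Q hQ
  rw [hE, Matrix.mul_sub, trace_sub] at hle
  linarith

end IsAligned

end

theorem nonneg_right_of_mul_nonneg_of_add_nonneg {R : Type*} [CommRing R] [LinearOrder R]
    [IsStrictOrderedRing R] {a b : R} (hmul : 0 ≤ a * b) (hadd : 0 ≤ a + b) : 0 ≤ b := by
  by_contra! hb
  exact (mul_neg_of_pos_of_neg (by linarith) hb).not_ge hmul

namespace IsAligned

variable {m n : ℕ} {N M : Matrix (Fin m) (Fin n) ℝ}

theorem apply_eq_zero_of_add_apply_eq_zero (h : IsAligned N M)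
    (hdiag : ∀ (i : Fin m) (j : Fin n), (i : ℕ) ≠ j → (N + M) i j = 0)
    {i : Fin m} {j : Fin n} (hij : (i : ℕ) ≠ j) : M i j = 0 := by
  let s : ℕ → ℝ := fun k ↦ if k = i then -1 else 1
  have hs (k : ℕ) : s k * s k = 1 := by
    simp only [s]
    split_ifs <;> norm_num
  have hfix : diagonal (fun k : Fin m ↦ s k) * (N + M) * diagonal (fun k : Fin n ↦ s k) =
      N + M := by
    ext a b
    rw [mul_diagonal, diagonal_mul]
    by_cases hab : (a : ℕ) = b
    · rw [hab, mul_right_comm, hs, one_mul]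
    · simp [hdiag a b hab]
  have hM := congrFun₂ (h.mul_mul_eq_self (diagonal_mem_orthogonalGroup fun k ↦ hs k)
    (diagonal_mem_orthogonalGroup fun k ↦ hs k) hfix) i j
  simp only [mul_diagonal, diagonal_mul, s, if_true, if_neg hij.symm] at hM
  linarith

theorem mul_apply_nonneg (h : IsAligned N M)
    (hdiag : ∀ (i : Fin m) (j : Fin n), (i : ℕ) ≠ j → M i j = 0)
    {i : Fin m} {j : Fin n} (hij : (i : ℕ) = j) : 0 ≤ N i j * M i j := by
  let s : Fin m → ℝ := fun k ↦ if k = i then -1 else 1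
  have hs (k : Fin m) : s k * s k = 1 := by
    simp only [s]
    split_ifs <;> norm_num
  have hflip : diagonal s * M * (1 : Matrix (Fin n) (Fin n) ℝ) = M - single i j (2 * M i j) := by
    ext a b
    simp only [s, Matrix.mul_one, diagonal_mul, Matrix.sub_apply, single_apply]
    grind
  have htrace := h.trace_transpose_mul_nonneg (diagonal_mem_orthogonalGroup hs) (one_mem _) hflip
  rw [trace_mul_single, transpose_apply, op_smul_eq_mul] at htrace
  linarith

theorem sub_mul_sub_nonneg (h : IsAligned N M)
    (hdiag : ∀ (i : Fin m) (j : Fin n), (i : ℕ) ≠ j → M i j = 0)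
    {i₁ i₂ : Fin m} {j₁ j₂ : Fin n} (h₁ : (i₁ : ℕ) = j₁) (h₂ : (i₂ : ℕ) = j₂) :
    0 ≤ (N i₁ j₁ - N i₂ j₂) * (M i₁ j₁ - M i₂ j₂) := by
  have hswap : swap ℝ i₁ i₂ * M * swap ℝ j₁ j₂ =
      M - (single i₁ j₁ (M i₁ j₁ - M i₂ j₂) - single i₂ j₂ (M i₁ j₁ - M i₂ j₂)) := by
    have hsub : swap ℝ i₁ i₂ * M * swap ℝ j₁ j₂ =
        M.submatrix (Equiv.swap i₁ i₂) (Equiv.swap j₁ j₂) := by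
      simp [swap, PEquiv.toMatrix_toPEquiv_mul, PEquiv.mul_toMatrix_toPEquiv]
    rw [hsub]
    ext a b
    simp only [submatrix_apply, Matrix.sub_apply, single_apply, Equiv.swap_apply_def]
    grind
  have htrace := h.trace_transpose_mul_nonneg (swap_mem_orthogonalGroup i₁ i₂)
    (swap_mem_orthogonalGroup j₁ j₂) hswap
  simp only [Matrix.mul_sub, trace_sub, trace_mul_single, transpose_apply, op_smul_eq_mul] at htrace
  linarith

theorem isSingularValueMatrix_right (h : IsAligned N M) (hsum : IsSingularValueMatrix (N + M)) :
    IsSingularValueMatrix M := by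
  have hdiag (i : Fin m) (j : Fin n) : (i : ℕ) ≠ j → M i j = 0 :=
    h.apply_eq_zero_of_add_apply_eq_zero hsum.apply_eq_zero
  refine ⟨hdiag, fun i j ↦ ?_, fun i₁ i₂ j₁ j₂ h₁ h₂ h₁₂ ↦ ?_⟩
  · by_cases hij : (i : ℕ) = j
    · exact nonneg_right_of_mul_nonneg_of_add_nonneg (h.mul_apply_nonneg hdiag hij)
        (hsum.nonneg i j)
    · exact (hdiag i j hij).ge
  · refine sub_nonneg.mp (nonneg_right_of_mul_nonneg_of_add_nonneg
      (h.sub_mul_sub_nonneg hdiag h₁ h₂) ?_)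
    have hle := hsum.apply_le_apply i₁ i₂ j₁ j₂ h₁ h₂ h₁₂
    simp only [Matrix.add_apply] at hle
    linarith

theorem isSingularValueMatrix_left (h : IsAligned N M) (hsum : IsSingularValueMatrix (N + M)) :
    IsSingularValueMatrix N :=
  h.symm.isSingularValueMatrix_right (add_comm N M ▸ hsum)

end IsAligned

end Aligned

section Loss

variable {m n : ℕ}

theorem frobNorm_sq (A : Matrix (Fin m) (Fin n) ℝ) : frobNorm A ^ 2 = trace (Aᵀ * A) := by
  rw [frobNorm, Real.sq_sqrt (by positivity), Finset.sum_comm]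
  simp [trace, Matrix.mul_apply, sq]

theorem frobNorm_sub_sq (A B : Matrix (Fin m) (Fin n) ℝ) :
    frobNorm (A - B) ^ 2 = trace (Aᵀ * A) - 2 * trace (Aᵀ * B) + trace (Bᵀ * B) := by
  simp only [frobNorm_sq, transpose_sub, Matrix.sub_mul, Matrix.mul_sub, trace_sub,
    trace_transpose_mul_comm B A]
  ring

theorem isAligned_of_forall_frobNorm_sub_le {N M : Matrix (Fin m) (Fin n) ℝ}
    (h : ∀ P ∈ orthogonalGroup (Fin m) ℝ, ∀ Q ∈ orthogonalGroup (Fin n) ℝ,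
      frobNorm (N - M) ≤ frobNorm (N - P * M * Q)) : IsAligned N M := fun P hP Q hQ ↦ by
  have hsq : frobNorm (N - M) ^ 2 ≤ frobNorm (N - P * M * Q) ^ 2 :=
    pow_le_pow_left₀ (Real.sqrt_nonneg _) (h P hP Q hQ) 2
  rw [frobNorm_sub_sq, frobNorm_sub_sq, trace_transpose_mul_of_orthogonal hP hQ] at hsq
  linarith

theorem singularValue_orthogonal_mul_mul {P : Matrix (Fin m) (Fin m) ℝ}
    {Q : Matrix (Fin n) (Fin n) ℝ} (hP : P ∈ orthogonalGroup (Fin m) ℝ)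
    (hQ : Q ∈ orthogonalGroup (Fin n) ℝ) (A : Matrix (Fin m) (Fin n) ℝ) :
    singularValue (P * A * Q) = singularValue A := by
  have hgram : (P * A * Q)ᴴ * (P * A * Q) = Qᵀ * (Aᴴ * A * Q) := by
    simp only [conjTranspose_eq_transpose_of_trivial, transpose_mul]
    calc Qᵀ * (Aᵀ * Pᵀ) * (P * A * Q) = Qᵀ * (Aᵀ * (Pᵀ * P) * A * Q) := by
          simp only [Matrix.mul_assoc]
      _ = Qᵀ * (Aᵀ * A * Q) := by rw [(mem_orthogonalGroup_iff' _ _).mp hP, Matrix.mul_one]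
  have heigenvalues : (isHermitian_conjTranspose_mul_self (P * A * Q)).eigenvalues =
      (isHermitian_conjTranspose_mul_self A).eigenvalues := by
    rw [IsHermitian.eigenvalues_eq_eigenvalues_iff, hgram, charpoly_mul_comm, Matrix.mul_assoc,
      (mem_orthogonalGroup_iff _ _).mp hQ, Matrix.mul_one]
  funext i
  simp only [singularValue, heigenvalues]

theorem frobNorm_sub_le_of_forall_schattenLoss_le {L : ℕ} {lam : ℝ}
    {N M : Matrix (Fin m) (Fin n) ℝ} (hmin : ∀ X, schattenLoss L lam N M ≤ schattenLoss L lam N X)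
    {P : Matrix (Fin m) (Fin m) ℝ} {Q : Matrix (Fin n) (Fin n) ℝ}
    (hP : P ∈ orthogonalGroup (Fin m) ℝ) (hQ : Q ∈ orthogonalGroup (Fin n) ℝ) :
    frobNorm (N - M) ≤ frobNorm (N - P * M * Q) := by
  have hle := hmin (P * M * Q)
  simp only [schattenLoss, schattenPow, singularValue_orthogonal_mul_mul hP hQ,
    add_le_add_iff_right] at hle
  exact le_of_sq_le_sq hle (Real.sqrt_nonneg _)

end Loss

theorem stmt7_general {m n : ℕ} {N M : Matrix (Fin m) (Fin n) ℝ}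
    (hnearest : ∀ P ∈ orthogonalGroup (Fin m) ℝ, ∀ Q ∈ orthogonalGroup (Fin n) ℝ,
      frobNorm (N - M) ≤ frobNorm (N - P * M * Q)) :
    ∃ U ∈ orthogonalGroup (Fin m) ℝ, ∃ V ∈ orthogonalGroup (Fin n) ℝ,
      ∃ S T : Matrix (Fin m) (Fin n) ℝ, IsSingularValueMatrix S ∧ IsSingularValueMatrix T ∧
        N = U * S * Vᵀ ∧ M = U * T * Vᵀ := by
  obtain ⟨U, hU, V, hV, D, hD, hsvd⟩ :=
    exists_orthogonal_mul_isSingularValueMatrix_mul_transpose_eq (N + M)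
  have hU' := transpose_mem_orthogonalGroup hU
  have haligned : IsAligned (Uᵀ * N * V) (Uᵀ * M * V) :=
    (isAligned_of_forall_frobNorm_sub_le hnearest).orthogonal_mul_mul hU' hV
  have hsum : IsSingularValueMatrix (Uᵀ * N * V + Uᵀ * M * V) := by
    have hcancel := orthogonal_mul_mul_transpose_cancel hU' (transpose_mem_orthogonalGroup hV) D
    simp only [transpose_transpose] at hcancel
    rwa [← Matrix.add_mul, ← Matrix.mul_add, ← hsvd, hcancel]
  exact ⟨U, hU, V, hV, _, _, haligned.isSingularValueMatrix_left hsum,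
    haligned.isSingularValueMatrix_right hsum,
    (orthogonal_mul_mul_transpose_cancel hU hV N).symm,
    (orthogonal_mul_mul_transpose_cancel hU hV M).symm⟩

/-- Any global minimizer `M*` of the Schatten-regularized objective shares
singular vectors with the target `M♮`: there are orthogonal `U`, `V` and
rectangular-diagonal `Σ♮`, `Σ*` with non-negative, non-increasingly ordered
diagonal entries such that `M♮ = U Σ♮ Vᵀ` and `M* = U Σ* Vᵀ` simultaneously. -/
theorem stmt7 (L : ℕ) (hL : 1 ≤ L) (lam : ℝ) (hlam : 0 < lam)
    (m n : ℕ) (Mnat Mstar : Matrix (Fin m) (Fin n) ℝ)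
    (hmin : ∀ X : Matrix (Fin m) (Fin n) ℝ,
      schattenLoss L lam Mnat Mstar ≤ schattenLoss L lam Mnat X) :
    ∃ (U : Matrix (Fin m) (Fin m) ℝ) (V : Matrix (Fin n) (Fin n) ℝ)
      (Snat Sstar : Matrix (Fin m) (Fin n) ℝ),
      Uᵀ * U = 1 ∧ Vᵀ * V = 1 ∧
      (∀ (i : Fin m) (j : Fin n), (i : ℕ) ≠ (j : ℕ) → Snat i j = 0) ∧
      (∀ (i : Fin m) (j : Fin n), (i : ℕ) ≠ (j : ℕ) → Sstar i j = 0) ∧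
      (∀ (i : Fin m) (j : Fin n), 0 ≤ Snat i j) ∧
      (∀ (i : Fin m) (j : Fin n), 0 ≤ Sstar i j) ∧
      (∀ (i₁ i₂ : Fin m) (j₁ j₂ : Fin n), (i₁ : ℕ) = (j₁ : ℕ) → (i₂ : ℕ) = (j₂ : ℕ) →
        (i₁ : ℕ) ≤ (i₂ : ℕ) → Snat i₂ j₂ ≤ Snat i₁ j₁) ∧
      (∀ (i₁ i₂ : Fin m) (j₁ j₂ : Fin n), (i₁ : ℕ) = (j₁ : ℕ) → (i₂ : ℕ) = (j₂ : ℕ) →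
        (i₁ : ℕ) ≤ (i₂ : ℕ) → Sstar i₂ j₂ ≤ Sstar i₁ j₁) ∧
      Mnat = U * Snat * Vᵀ ∧ Mstar = U * Sstar * Vᵀ := by
  obtain ⟨U, hU, V, hV, S, T, hS, hT, hN, hM⟩ :=
    stmt7_general fun _ hP _ hQ ↦ frobNorm_sub_le_of_forall_schattenLoss_le hmin hP hQ
  exact ⟨U, V, S, T, (mem_orthogonalGroup_iff' _ _).mp hU, (mem_orthogonalGroup_iff' _ _).mp hV,
    hS.apply_eq_zero, hT.apply_eq_zero, hS.nonneg, hT.nonneg, hS.apply_le_apply, hT.apply_le_apply,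
    hN, hM⟩
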